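/- (Convergence Result 2.) Assume the Hamiltonians are independent of x, H_i(x,p) = H_i(p) for i = 1,2, with each H_i continuous, coercive, uniformly convex ((A6)) and satisfying H_i(0) = 0 ((A7)). Let (u₁, u₂) be the viscosity solution of (C) with Lipschitz continuous initial data (u₀₁, u₀₂). Then there exists a constant M ∈ ℝ such that u_i(·,t) − M → 0 uniformly on 𝕋^n as t → ∞, for i = 1,2. -/

import Mathlib

open MeasureTheory Filter Topology Set

noncomputable section

/-- Euclidean space `ℝ^n`; the torus `𝕋^n` is modelled by `ℤ^n`-periodic functions on it. -/
abbrev En (n : ℕ) : Type := EuclideanSpace ℝ (Fin n)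

/-- The integer vector `k ∈ ℤ^n` viewed as an element of `ℝ^n`. -/
def intVec (n : ℕ) (k : Fin n → ℤ) : En n := WithLp.toLp 2 (fun i => (k i : ℝ))

/-- A `ℤ^n`-periodic function on `ℝ^n`, i.e. a function on the torus `𝕋^n`. -/
def ZPeriodic {n : ℕ} (f : En n → ℝ) : Prop :=
  ∀ (x : En n) (k : Fin n → ℤ), f (x + intVec n k) = f x

/-- A Hamiltonian `H : 𝕋^n × ℝ^n → ℝ` (periodic in the first variable). -/
def ZPeriodicH {n : ℕ} (H : En n → En n → ℝ) : Prop :=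
  ∀ (x : En n) (k : Fin n → ℤ) (p : En n), H (x + intVec n k) p = H x p

/-- A function on `𝕋^n × ℝ` (space-time, periodic in space). -/
def ZPeriodicST {n : ℕ} (u : En n × ℝ → ℝ) : Prop :=
  ∀ (x : En n) (k : Fin n → ℤ) (t : ℝ), u (x + intVec n k, t) = u (x, t)

/-- (A1): coercivity, `lim_{r→∞} inf{H(x,p) : x ∈ 𝕋^n, |p| ≥ r} = ∞`. -/
def Coercive {n : ℕ} (H : En n → En n → ℝ) : Prop :=
  ∀ M : ℝ, ∃ r : ℝ, ∀ (x p : En n), r ≤ ‖p‖ → M ≤ H x p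

/-- Coercivity for an `x`-independent Hamiltonian. -/
def CoerciveP {n : ℕ} (H : En n → ℝ) : Prop :=
  ∀ M : ℝ, ∃ r : ℝ, ∀ p : En n, r ≤ ‖p‖ → M ≤ H p

/-- Lipschitz continuity (membership in `W^{1,∞}`). -/
def IsLip {n : ℕ} (f : En n → ℝ) : Prop := ∃ K : NNReal, LipschitzWith K f

/-- Viscosity subsolution inequality for one stationary equation
`H(x, Dw) + c (w - wo) ≤ ρ(x)` of a weakly coupled system. -/
def StatSubIneq {n : ℕ} (H : En n → En n → ℝ) (c : ℝ) (w wo : En n → ℝ) (ρ : En n → ℝ) : Prop :=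
  ∀ φ : En n → ℝ, ContDiff ℝ 1 φ →
    ∀ x₀ : En n, IsLocalMax (fun x => w x - φ x) x₀ →
      H x₀ (gradient φ x₀) + c * (w x₀ - wo x₀) ≤ ρ x₀

/-- Viscosity supersolution inequality for one stationary equation. -/
def StatSuperIneq {n : ℕ} (H : En n → En n → ℝ) (c : ℝ) (w wo : En n → ℝ) (ρ : En n → ℝ) : Prop :=
  ∀ φ : En n → ℝ, ContDiff ℝ 1 φ →
    ∀ x₀ : En n, IsLocalMin (fun x => w x - φ x) x₀ →
      ρ x₀ ≤ H x₀ (gradient φ x₀) + c * (w x₀ - wo x₀)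

/-- Viscosity subsolution of the stationary system
`Hᵢ(x, Dwᵢ) + cᵢ (wᵢ - wⱼ) = ρᵢ(x)`, `i = 1,2`. -/
def CellSub {n : ℕ} (H₁ H₂ : En n → En n → ℝ) (c₁ c₂ : ℝ) (w₁ w₂ : En n → ℝ)
    (ρ₁ ρ₂ : En n → ℝ) : Prop :=
  StatSubIneq H₁ c₁ w₁ w₂ ρ₁ ∧ StatSubIneq H₂ c₂ w₂ w₁ ρ₂

/-- Viscosity supersolution of the stationary system. -/
def CellSuper {n : ℕ} (H₁ H₂ : En n → En n → ℝ) (c₁ c₂ : ℝ) (w₁ w₂ : En n → ℝ)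
    (ρ₁ ρ₂ : En n → ℝ) : Prop :=
  StatSuperIneq H₁ c₁ w₁ w₂ ρ₁ ∧ StatSuperIneq H₂ c₂ w₂ w₁ ρ₂

/-- Viscosity solution (continuous, sub- and supersolution) of the stationary system. -/
def CellSolution {n : ℕ} (H₁ H₂ : En n → En n → ℝ) (c₁ c₂ : ℝ) (v₁ v₂ : En n → ℝ)
    (ρ₁ ρ₂ : En n → ℝ) : Prop :=
  Continuous v₁ ∧ Continuous v₂ ∧
    CellSub H₁ H₂ c₁ c₂ v₁ v₂ ρ₁ ρ₂ ∧ CellSuper H₁ H₂ c₁ c₂ v₁ v₂ ρ₁ ρ₂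

/-- Subsolution of the ergodic problem (E) with constant `c` (coupling constants 1). -/
def ErgSub {n : ℕ} (H₁ H₂ : En n → En n → ℝ) (v₁ v₂ : En n → ℝ) (c : ℝ) : Prop :=
  CellSub H₁ H₂ 1 1 v₁ v₂ (fun _ => c) (fun _ => c)

/-- Supersolution of the ergodic problem (E). -/
def ErgSuper {n : ℕ} (H₁ H₂ : En n → En n → ℝ) (v₁ v₂ : En n → ℝ) (c : ℝ) : Prop :=
  CellSuper H₁ H₂ 1 1 v₁ v₂ (fun _ => c) (fun _ => c)

/-- Viscosity solution of the ergodic problem (E):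
`H₁(x,Dv₁) + v₁ - v₂ = c`, `H₂(x,Dv₂) + v₂ - v₁ = c` on `𝕋^n`. -/
def ErgSolution {n : ℕ} (H₁ H₂ : En n → En n → ℝ) (v₁ v₂ : En n → ℝ) (c : ℝ) : Prop :=
  CellSolution H₁ H₂ 1 1 v₁ v₂ (fun _ => c) (fun _ => c)

/-- Viscosity subsolution inequality for one evolution equation
`∂ₜ u + H(x, Du) + u - uo ≤ 0` in `𝕋^n × (0,∞)`. -/
def EvolSubIneq {n : ℕ} (H : En n → En n → ℝ) (u uo : En n × ℝ → ℝ) : Prop :=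
  ∀ φ : En n × ℝ → ℝ, ContDiff ℝ 1 φ →
    ∀ (x₀ : En n) (t₀ : ℝ), 0 < t₀ →
      IsLocalMax (fun q => u q - φ q) (x₀, t₀) →
      fderiv ℝ φ (x₀, t₀) (0, 1) + H x₀ (gradient (fun y => φ (y, t₀)) x₀)
        + u (x₀, t₀) - uo (x₀, t₀) ≤ 0

/-- Viscosity supersolution inequality for one evolution equation. -/
def EvolSuperIneq {n : ℕ} (H : En n → En n → ℝ) (u uo : En n × ℝ → ℝ) : Prop :=
  ∀ φ : En n × ℝ → ℝ, ContDiff ℝ 1 φ →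
    ∀ (x₀ : En n) (t₀ : ℝ), 0 < t₀ →
      IsLocalMin (fun q => u q - φ q) (x₀, t₀) →
      0 ≤ fderiv ℝ φ (x₀, t₀) (0, 1) + H x₀ (gradient (fun y => φ (y, t₀)) x₀)
        + u (x₀, t₀) - uo (x₀, t₀)

/-- Viscosity subsolution of system (C) (with coupling constants `c₁ = c₂ = 1`). -/
def SysSub {n : ℕ} (H₁ H₂ : En n → En n → ℝ) (u₁ u₂ : En n × ℝ → ℝ) : Prop :=
  EvolSubIneq H₁ u₁ u₂ ∧ EvolSubIneq H₂ u₂ u₁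

/-- Viscosity supersolution of system (C). -/
def SysSuper {n : ℕ} (H₁ H₂ : En n → En n → ℝ) (u₁ u₂ : En n × ℝ → ℝ) : Prop :=
  EvolSuperIneq H₁ u₁ u₂ ∧ EvolSuperIneq H₂ u₂ u₁

/-- Viscosity solution of the Cauchy problem (C): continuous on `𝕋^n × [0,∞)`,
sub- and supersolution, attaining the initial data. -/
def SysSolution {n : ℕ} (H₁ H₂ : En n → En n → ℝ) (u₀₁ u₀₂ : En n → ℝ)
    (u₁ u₂ : En n × ℝ → ℝ) : Prop :=
  ContinuousOn u₁ {q : En n × ℝ | 0 ≤ q.2} ∧ ContinuousOn u₂ {q : En n × ℝ | 0 ≤ q.2} ∧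
    SysSub H₁ H₂ u₁ u₂ ∧ SysSuper H₁ H₂ u₁ u₂ ∧
    (∀ x, u₁ (x, 0) = u₀₁ x) ∧ (∀ x, u₂ (x, 0) = u₀₂ x)

/-- Viscosity subsolution of the single stationary equation `H(x,Dv) ≤ c` on `𝕋^n`. -/
def SingleSub {n : ℕ} (H : En n → En n → ℝ) (v : En n → ℝ) (c : ℝ) : Prop :=
  ∀ φ : En n → ℝ, ContDiff ℝ 1 φ →
    ∀ x₀ : En n, IsLocalMax (fun x => v x - φ x) x₀ → H x₀ (gradient φ x₀) ≤ c

/-- Viscosity supersolution of the single stationary equation `H(x,Dv) ≥ c` on `𝕋^n`. -/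
def SingleSuper {n : ℕ} (H : En n → En n → ℝ) (v : En n → ℝ) (c : ℝ) : Prop :=
  ∀ φ : En n → ℝ, ContDiff ℝ 1 φ →
    ∀ x₀ : En n, IsLocalMin (fun x => v x - φ x) x₀ → c ≤ H x₀ (gradient φ x₀)

/-- Viscosity solution of the single stationary equation `H(x,Dv) = c` on `𝕋^n`. -/
def SingleSolution {n : ℕ} (H : En n → En n → ℝ) (v : En n → ℝ) (c : ℝ) : Prop :=
  Continuous v ∧ SingleSub H v c ∧ SingleSuper H v c

/-- Uniform convergence `u(·,t) → v` on `𝕋^n` as `t → ∞`. -/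
def UnifTendsTo {n : ℕ} (u : En n × ℝ → ℝ) (v : En n → ℝ) : Prop :=
  ∀ ε : ℝ, 0 < ε → ∃ T : ℝ, ∀ t : ℝ, T ≤ t → ∀ x : En n, |u (x, t) - v x| ≤ ε

/-- (A8)⁺ at level `η` with constant `ψ`. -/
def A8plusAt {n : ℕ} (H : En n → En n → ℝ) (η ψ : ℝ) : Prop :=
  ∀ (x p q : En n), η ≤ H x (p + q) → H x q ≤ 0 →
    ∀ μ : ℝ, 0 < μ → μ ≤ 1 → H x (p + q) + ψ * (1 - μ) ≤ μ * H x (μ⁻¹ • p + q)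

/-- (A8)⁻ at level `η` with constant `ψ`. -/
def A8minusAt {n : ℕ} (H : En n → En n → ℝ) (η ψ : ℝ) : Prop :=
  ∀ (x p q : En n), H x (p + q) ≤ -η → 0 ≤ H x q →
    ∀ μ : ℝ, 1 ≤ μ → μ * H x (μ⁻¹ • p + q) ≤ H x (p + q) - ψ * (μ - 1) / μ

/-- (A8)⁺ with threshold `η₀`. -/
def A8plus {n : ℕ} (H : En n → En n → ℝ) (η₀ : ℝ) : Prop :=
  ∀ η : ℝ, 0 < η → η ≤ η₀ → ∃ ψ : ℝ, 0 < ψ ∧ A8plusAt H η ψ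

/-- (A8)⁻ with threshold `η₀`. -/
def A8minus {n : ℕ} (H : En n → En n → ℝ) (η₀ : ℝ) : Prop :=
  ∀ η : ℝ, 0 < η → η ≤ η₀ → ∃ ψ : ℝ, 0 < ψ ∧ A8minusAt H η ψ

/-- The function `F` of the Key Lemma: `F(r) = C r` for `r ≥ 0`, `F(r) = r / C` for `r < 0`. -/
def Fc (C r : ℝ) : ℝ := if 0 ≤ r then C * r else r / C

/-- `α_η⁺(s)` (resp. `β_η⁺(s)` with `u = u₂`):
`min_{x ∈ 𝕋^n, t ≥ s} (u(x,t) - v(x) + η (t-s)) / (u(x,s) - v(x))`. -/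
def alphaPlus {n : ℕ} (u : En n × ℝ → ℝ) (v : En n → ℝ) (η s : ℝ) : ℝ :=
  sInf {r : ℝ | ∃ (x : En n) (t : ℝ), s ≤ t ∧
    r = (u (x, t) - v x + η * (t - s)) / (u (x, s) - v x)}

/-- `α_η⁻(s)` (resp. `β_η⁻(s)` with `u = u₂`):
`max_{x ∈ 𝕋^n, t ≥ s} (u(x,t) - v(x) - η (t-s)) / (u(x,s) - v(x))`. -/
def alphaMinus {n : ℕ} (u : En n × ℝ → ℝ) (v : En n → ℝ) (η s : ℝ) : ℝ :=
  sSup {r : ℝ | ∃ (x : En n) (t : ℝ), s ≤ t ∧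
    r = (u (x, t) - v x - η * (t - s)) / (u (x, s) - v x)}

/-- (A9)⁺. -/
def A9plus {n : ℕ} (H : En n → En n → ℝ) : Prop :=
  ∃ K : Set (En n), IsClosed K ∧ (∀ x ∈ K, ∀ k : Fin n → ℤ, x + intVec n k ∈ K) ∧
    (∀ x ∈ K, (∀ p : En n, 0 ≤ H x p) ∧ ∃ p : En n, H x p = 0) ∧
    (∀ ε : ℝ, 0 < ε → ∃ η₀ : ℝ, 0 < η₀ ∧ ∃ ψ : ℝ → ℝ, (∀ r : ℝ, 0 < r → 0 < ψ r) ∧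
      ∀ η : ℝ, 0 < η → η ≤ η₀ → ∀ (x p q : En n), ε ≤ Metric.infDist x K →
        η ≤ H x (p + q) → H x q ≤ 0 →
        ∀ μ : ℝ, 0 < μ → μ ≤ 1 → H x (p + q) + ψ η * (1 - μ) ≤ μ * H x (μ⁻¹ • p + q))

/-- (A9)⁻. -/
def A9minus {n : ℕ} (H : En n → En n → ℝ) : Prop :=
  ∃ K : Set (En n), IsClosed K ∧ (∀ x ∈ K, ∀ k : Fin n → ℤ, x + intVec n k ∈ K) ∧
    (∀ x ∈ K, (∀ p : En n, 0 ≤ H x p) ∧ ∃ p : En n, H x p = 0) ∧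
    (∀ ε : ℝ, 0 < ε → ∃ η₀ : ℝ, 0 < η₀ ∧ ∃ ψ : ℝ → ℝ, (∀ r : ℝ, 0 < r → 0 < ψ r) ∧
      ∀ η : ℝ, 0 < η → η ≤ η₀ → ∀ (x p q : En n), ε ≤ Metric.infDist x K →
        H x (p + q) ≤ -η → 0 ≤ H x q →
        ∀ μ : ℝ, 1 ≤ μ → μ * H x (μ⁻¹ • p + q) ≤ H x (p + q) - ψ η * (μ - 1) / μ)

/-- (A6): uniform convexity of an `x`-independent Hamiltonian. -/
def UnifConvex {n : ℕ} (H : En n → ℝ) : Prop :=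
  ∃ α : ℝ, 0 < α ∧ ∀ᵐ q : En n ∂volume, DifferentiableAt ℝ H q ∧
    ∀ p : En n, H q + fderiv ℝ H q (p - q) + α * ‖p - q‖ ^ 2 ≤ H p

end

/-!
The supporting hyperplane of `Hᵢ` at `p = 0`, with its quadratic gain, bounds the Lagrangian by
`Lᵢ(bᵢ + v) ≤ C |v|²`: along a ray of velocity `bᵢ + v` the function `uᵢ` grows at rate at most
`uⱼ - uᵢ + C |v|²`. With `v = 0` this makes the spatial maxima `Gᵢ` satisfy `Gᵢ' ≤ Gⱼ - Gᵢ`, so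
`G₁ + G₂` is nonincreasing. As `Hᵢ(0) = 0`, the minimum of `u₁` and `u₂` over the torus is
nondecreasing in time, hence `G₁ + G₂` has a finite limit `2M`, and `Gᵢ' ≤ 2M + o(1) - 2Gᵢ` gives
`uᵢ ≤ M + o(1)`.

Suppose `u₁` were below `M - κ` at some point at a late time. A short time later it is below
`M - κ / 2` on a ball of radius independent of that time, and finitely many translates of the ball,
by vectors `w ∈ W`, cover the torus. Moving the points `x - w` with the velocities `bᵢ + w / T`,
which make all of them meet after a time `T`, costs only `|W| C |w|² / T` in each equation. The sum
over `W` of the values of `u₁` contains one dipped term, so after the time `T` the sum `G₁ + G₂` is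
below `2M`, a contradiction.
-/

section StrongSubgradient

variable {E : Type*} [NormedAddCommGroup E] [NormedSpace ℝ E] {H : E → ℝ} {α : ℝ}

/-- `f` is a subgradient of `H` at `q` with quadratic gain `α`: the inequality that uniform
convexity (A6) asserts for `f = DH(q)`. -/
def IsStrongSubgradient (H : E → ℝ) (α : ℝ) (q : E) (f : E →L[ℝ] ℝ) : Prop :=
  ∀ p, H q + f (p - q) + α * ‖p - q‖ ^ 2 ≤ H p

namespace IsStrongSubgradient

theorem norm_le {q x : E} {f : E →L[ℝ] ℝ} {B : ℝ} (hf : IsStrongSubgradient H α q f)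
    (hα : 0 ≤ α) (hB : ∀ p ∈ Metric.closedBall x 2, ‖H p‖ ≤ B)
    (hq : q ∈ Metric.closedBall x 1) : ‖f‖ ≤ 2 * B := by
  have hqx : ‖q - x‖ ≤ 1 := mem_closedBall_iff_norm.1 hq
  have hHq : ‖H q‖ ≤ B := hB q (Metric.closedBall_subset_closedBall one_le_two hq)
  have apply_le : ∀ e : E, ‖e‖ = 1 → f e ≤ 2 * B := fun e he => by
    have hsupport := hf (q + e)
    rw [add_sub_cancel_left] at hsupport
    have hHqe : ‖H (q + e)‖ ≤ B := hB _ <| mem_closedBall_iff_norm.2 <| by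
      rw [add_sub_right_comm]
      linarith [norm_add_le (q - x) e]
    have : 0 ≤ α * ‖e‖ ^ 2 := by positivity
    linarith [(abs_le.1 hHq).1, (abs_le.1 hHqe).2]
  refine f.opNorm_le_of_unit_norm (by linarith [norm_nonneg (H q)]) fun e he => abs_le.2 ⟨?_, ?_⟩
  · linarith [apply_le (-e) (by rw [norm_neg, he]), map_neg f e]
  · exact apply_le e he

theorem of_tendsto {ι : Type*} {l : Filter ι} [l.NeBot] {q : ι → E} {q₀ : E}
    {f : ι → E →L[ℝ] ℝ} {f₀ : E →L[ℝ] ℝ} (hH : Continuous H)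
    (hf : ∀ k, IsStrongSubgradient H α (q k) (f k)) (hq₀ : Tendsto q l (𝓝 q₀))
    (hf₀ : Tendsto f l (𝓝 f₀)) : IsStrongSubgradient H α q₀ f₀ := by
  intro p
  have hsub : Tendsto (fun k => p - q k) l (𝓝 (p - q₀)) := hq₀.const_sub p
  have happly : Tendsto (fun k => f k (p - q k)) l (𝓝 (f₀ (p - q₀))) :=
    (isBoundedBilinearMap_apply.continuous.tendsto (f₀, p - q₀)).comp (hf₀.prodMk_nhds hsub)
  exact le_of_tendsto' ((((hH.tendsto q₀).comp hq₀).add happly).add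
    ((hsub.norm.pow 2).const_mul α)) fun k => hf k p

end IsStrongSubgradient

theorem exists_isStrongSubgradient_of_dense [FiniteDimensional ℝ E] (hH : Continuous H)
    (hα : 0 ≤ α) (hdense : Dense {q | ∃ f, IsStrongSubgradient H α q f}) (q₀ : E) :
    ∃ f, IsStrongSubgradient H α q₀ f := by
  have : ProperSpace E := FiniteDimensional.proper ℝ E
  obtain ⟨q, hqf, hq₀⟩ := mem_closure_iff_seq_limit.1 (hdense q₀)
  choose f hf using hqf
  obtain ⟨B, hB⟩ :=
    (isCompact_closedBall q₀ 2).exists_bound_of_continuousOn hH.continuousOn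
  have hf_bounded : ∀ᶠ k in atTop, f k ∈ Metric.closedBall (0 : E →L[ℝ] ℝ) (2 * B) := by
    filter_upwards [hq₀.eventually (Metric.closedBall_mem_nhds q₀ one_pos)] with k hk
    exact mem_closedBall_zero_iff.2 ((hf k).norm_le hα hB hk)
  obtain ⟨f₀, -, ψ, hψ, hf₀⟩ := (isCompact_closedBall (0 : E →L[ℝ] ℝ) (2 * B)).tendsto_subseq'
    hf_bounded.frequently
  exact ⟨f₀, .of_tendsto hH (fun k => hf (ψ k)) (hq₀.comp hψ.tendsto_atTop) hf₀⟩

end StrongSubgradient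

section QuadraticSupport

variable {n : ℕ}

/-- `H(x, p) ≥ ⟨b, p⟩ + α |p|²` with `α > 0` and `b` independent of `x`: what (A6) and (A7) say
about the behaviour of `H` relative to `p = 0`. -/
def HasQuadraticSupport (H : En n → En n → ℝ) : Prop :=
  ∃ b : En n, ∃ α > 0, ∀ x p, inner ℝ b p + α * ‖p‖ ^ 2 ≤ H x p

theorem UnifConvex.hasQuadraticSupport {H : En n → ℝ} (hconv : UnifConvex H) (hH : Continuous H)
    (hH0 : H 0 = 0) : HasQuadraticSupport fun _ => H := by
  obtain ⟨α, hα, hae⟩ := hconv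
  have hdense : Dense {q | ∃ f, IsStrongSubgradient H α q f} :=
    (Measure.dense_of_ae hae).mono fun q hq => ⟨fderiv ℝ H q, hq.2⟩
  obtain ⟨f, hf⟩ := exists_isStrongSubgradient_of_dense hH hα.le hdense 0
  refine ⟨(InnerProductSpace.toDual ℝ (En n)).symm f, α, hα, fun _ p => ?_⟩
  simpa [IsStrongSubgradient, hH0] using hf p

/-- The family of affine minorants `p ↦ ⟨b + v, p⟩ - C |v|²` of `H(x, ·)`, i.e. the bound
`L(x, b + v) ≤ C |v|²` on the Lagrangian of `H`. -/
def HasAffineMinorants (H : En n → En n → ℝ) (b : En n) (C : ℝ) : Prop :=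
  ∀ v x p, inner ℝ (b + v) p - C * ‖v‖ ^ 2 ≤ H x p

theorem HasQuadraticSupport.exists_hasAffineMinorants {H : En n → En n → ℝ}
    (hH : HasQuadraticSupport H) : ∃ b, ∃ C ≥ 0, HasAffineMinorants H b C := by
  obtain ⟨b, α, hα, hsupport⟩ := hH
  refine ⟨b, 1 / (4 * α), by positivity, fun v x p => ?_⟩
  have young : ‖v‖ * ‖p‖ ≤ α * ‖p‖ ^ 2 + 1 / (4 * α) * ‖v‖ ^ 2 := by
    have hsq : α * ‖p‖ ^ 2 + 1 / (4 * α) * ‖v‖ ^ 2 - ‖v‖ * ‖p‖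
        = 1 / (4 * α) * (2 * α * ‖p‖ - ‖v‖) ^ 2 := by
      field_simp
      ring
    exact sub_nonneg.1 (hsq ▸ by positivity)
  rw [inner_add_left]
  linarith [hsupport x p, real_inner_le_norm v p]

theorem HasAffineMinorants.mono {H : En n → En n → ℝ} {b : En n} {C C' : ℝ}
    (hH : HasAffineMinorants H b C) (hC : C ≤ C') : HasAffineMinorants H b C' := fun v x p =>
  (sub_le_sub_left (mul_le_mul_of_nonneg_right hC (sq_nonneg _)) _).trans (hH v x p)

end QuadraticSupport

section Torus

variable {n : ℕ}

theorem exists_norm_add_intVec_le (x : En n) : ∃ k : Fin n → ℤ, ‖x + intVec n k‖ ≤ √n := by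
  refine ⟨fun i => -⌊x i⌋, ?_⟩
  rw [EuclideanSpace.norm_eq]
  refine Real.sqrt_le_sqrt ?_
  have coord_le : ∀ i, ‖(x + intVec n fun i => -⌊x i⌋) i‖ ^ 2 ≤ 1 := fun i => by
    have hfract : (x + intVec n fun i => -⌊x i⌋) i = Int.fract (x i) := by
      simp [intVec, Int.fract, sub_eq_add_neg]
    rw [hfract, Real.norm_of_nonneg (Int.fract_nonneg _)]
    exact pow_le_one₀ (Int.fract_nonneg _) (Int.fract_lt_one _).le
  simpa using Finset.sum_le_sum fun i (_ : i ∈ Finset.univ) => coord_le i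

theorem exists_finset_net {r : ℝ} (hr : 0 < r) :
    ∃ W : Finset (En n), (∀ w ∈ W, ‖w‖ ≤ √n) ∧
      ∀ x, ∃ w ∈ W, ∃ k, ‖x + intVec n k - w‖ ≤ r := by
  obtain ⟨W, hWball, hWfin, hcover⟩ :=
    (isCompact_closedBall (0 : En n) √n).finite_cover_balls hr
  refine ⟨hWfin.toFinset, fun w hw => mem_closedBall_zero_iff.1 (hWball (hWfin.mem_toFinset.1 hw)),
    fun x => ?_⟩
  obtain ⟨k, hk⟩ := exists_norm_add_intVec_le x
  obtain ⟨w, hw, hdist⟩ := mem_iUnion₂.1 (hcover (mem_closedBall_zero_iff.2 hk))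
  exact ⟨w, hWfin.mem_toFinset.2 hw, k, (mem_ball_iff_norm.1 hdist).le⟩

/-- The space `C(𝕋ⁿ × [0, ∞))`; nothing is asked of `u` at negative times. -/
structure TorusContinuous (u : En n × ℝ → ℝ) : Prop where
  periodic : ZPeriodicST u
  continuousOn : ContinuousOn u {q | 0 ≤ q.2}

/-- The maximum of `u(·, t)` over `𝕋ⁿ`; it is attained, hence not a junk value of `⨆`, if `u` is
continuous on `𝕋ⁿ × [0, ∞)` and `t ≥ 0`. -/
noncomputable def spaceSup (u : En n × ℝ → ℝ) (t : ℝ) : ℝ := ⨆ x, u (x, t)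

theorem spaceSup_le {u : En n × ℝ → ℝ} {t a : ℝ} (h : ∀ x, u (x, t) ≤ a) : spaceSup u t ≤ a :=
  ciSup_le h

namespace TorusContinuous

variable {u v : En n × ℝ → ℝ} {t : ℝ}

theorem neg (hu : TorusContinuous u) : TorusContinuous fun q => -u q :=
  ⟨fun x k t => congrArg Neg.neg (hu.periodic x k t), hu.continuousOn.neg⟩

theorem max (hu : TorusContinuous u) (hv : TorusContinuous v) :
    TorusContinuous fun q => max (u q) (v q) :=
  ⟨fun x k t => by rw [hu.periodic, hv.periodic],
    fun q hq => (hu.continuousOn q hq).max (hv.continuousOn q hq)⟩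

theorem exists_forall_le (hu : TorusContinuous u) (ht : 0 ≤ t) :
    ∃ x, ∀ y, u (y, t) ≤ u (x, t) := by
  have hslice : Continuous fun x => u (x, t) :=
    hu.continuousOn.comp_continuous (by fun_prop) fun _ => ht
  obtain ⟨x, -, hx⟩ := (isCompact_closedBall (0 : En n) √n).exists_isMaxOn
    ⟨0, by simp⟩ hslice.continuousOn
  refine ⟨x, fun y => ?_⟩
  obtain ⟨k, hk⟩ := exists_norm_add_intVec_le y
  rw [← hu.periodic y k t]
  exact hx (mem_closedBall_zero_iff.2 hk)

theorem le_spaceSup (hu : TorusContinuous u) (ht : 0 ≤ t) (x : En n) :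
    u (x, t) ≤ spaceSup u t := by
  obtain ⟨x₀, hx₀⟩ := hu.exists_forall_le ht
  exact le_ciSup (f := fun x => u (x, t)) ⟨u (x₀, t), forall_mem_range.2 hx₀⟩ x

theorem exists_eq_spaceSup (hu : TorusContinuous u) (ht : 0 ≤ t) :
    ∃ x, u (x, t) = spaceSup u t := by
  obtain ⟨x, hx⟩ := hu.exists_forall_le ht
  exact ⟨x, (hu.le_spaceSup ht x).antisymm (spaceSup_le hx)⟩

theorem exists_modulus (hu : TorusContinuous u) (ht : 0 ≤ t) {ε : ℝ} (hε : 0 < ε) :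
    ∃ ρ > 0, ∀ x y s, 0 ≤ s → ‖y - x‖ ≤ ρ → |s - t| ≤ ρ → |u (y, s) - u (x, t)| ≤ ε := by
  have hK : IsCompact (Metric.closedBall (0 : En n) (√n + 1) ×ˢ Icc 0 (t + 1)) :=
    (isCompact_closedBall _ _).prod isCompact_Icc
  obtain ⟨δ, hδ, hunif⟩ := Metric.uniformContinuousOn_iff.1
    (hK.uniformContinuousOn_of_continuous (hu.continuousOn.mono fun _ hq => hq.2.1)) ε hε
  refine ⟨min (δ / 2) 1, by positivity, fun x y s hs hxy hst => ?_⟩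
  obtain ⟨hxyδ, hxy1⟩ := le_min_iff.1 hxy
  obtain ⟨hstδ, hst1⟩ := le_min_iff.1 hst
  obtain ⟨k, hk⟩ := exists_norm_add_intVec_le x
  have hyk : ‖y + intVec n k‖ ≤ √n + 1 := calc
    ‖y + intVec n k‖ = ‖(x + intVec n k) + (y - x)‖ := by congr 1; abel
    _ ≤ √n + 1 := (norm_add_le _ _).trans (add_le_add hk hxy1)
  have hdist : dist (y + intVec n k, s) (x + intVec n k, t) < δ := by
    rw [Prod.dist_eq, dist_add_right, dist_eq_norm, Real.dist_eq]
    exact max_lt (by linarith) (by linarith)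
  have hclose := hunif (y + intVec n k, s)
    ⟨mem_closedBall_zero_iff.2 hyk, hs, by linarith [(abs_le.1 hst1).2]⟩ (x + intVec n k, t)
    ⟨mem_closedBall_zero_iff.2 (by linarith), ht, by linarith⟩ hdist
  rw [hu.periodic, hu.periodic] at hclose
  exact hclose.le

theorem continuousOn_spaceSup (hu : TorusContinuous u) : ContinuousOn (spaceSup u) (Ici 0) := by
  intro t (ht : 0 ≤ t)
  refine Metric.continuousWithinAt_iff.2 fun ε hε => ?_
  obtain ⟨ρ, hρ, hmod⟩ := hu.exists_modulus ht (half_pos hε)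
  refine ⟨ρ, hρ, fun s (hs : 0 ≤ s) hst => ?_⟩
  have hclose : ∀ x, |u (x, s) - u (x, t)| ≤ ε / 2 := fun x =>
    hmod x x s hs (by simpa using hρ.le) hst.le
  have hle : spaceSup u s ≤ spaceSup u t + ε / 2 :=
    spaceSup_le fun x => by linarith [(abs_le.1 (hclose x)).2, hu.le_spaceSup ht x]
  have hge : spaceSup u t ≤ spaceSup u s + ε / 2 :=
    spaceSup_le fun x => by linarith [(abs_le.1 (hclose x)).1, hu.le_spaceSup hs x]
  exact abs_lt.2 ⟨by linarith, by linarith⟩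

theorem unifTendsTo_const (hu : TorusContinuous u) {M : ℝ}
    (hupper : ∀ ε > 0, ∀ᶠ t in atTop, spaceSup u t ≤ M + ε)
    (hlower : ∀ ε > 0, ∀ᶠ t in atTop, ∀ x, M - ε ≤ u (x, t)) : UnifTendsTo u fun _ => M := by
  intro ε hε
  refine eventually_atTop.1 ?_
  filter_upwards [eventually_ge_atTop 0, hupper ε hε, hlower ε hε] with t ht hup hlow x
  exact abs_le.2 ⟨by linarith [hlow x], by linarith [hu.le_spaceSup ht x]⟩

end TorusContinuous

end Torus

section ViscosityTimeDerivative

theorem hasDerivAt_timeSlice {E : Type*} [NormedAddCommGroup E] [NormedSpace ℝ E]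
    {φ : E × ℝ → ℝ} {z : E} {s : ℝ} (hφ : DifferentiableAt ℝ φ (z, s)) :
    HasDerivAt (fun s' => φ (z, s')) (fderiv ℝ φ (z, s) (0, 1)) s :=
  hφ.hasFDerivAt.comp_hasDerivAt s ((hasDerivAt_const s z).prodMk (hasDerivAt_id s))

variable {E : Type*} [NormedAddCommGroup E] [InnerProductSpace ℝ E]

/-- The viscosity subsolution inequality `∂ₜv ≤ g` on `E × (0, ∞)`. -/
def ViscTimeDerivLE (v g : E × ℝ → ℝ) : Prop :=
  ∀ φ : E × ℝ → ℝ, ContDiff ℝ 1 φ → ∀ z s, 0 < s →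
    IsLocalMax (fun q => v q - φ q) (z, s) → fderiv ℝ φ (z, s) (0, 1) ≤ g (z, s)

theorem exists_contDiff_barrier (z₀ : E) (c : ℝ) {h r σ N : ℝ} (hh : 0 < h) (hr : 0 < r)
    (hσ : 0 < σ) (hσN : σ < N) :
    ∃ φ : E × ℝ → ℝ, ContDiff ℝ 1 φ ∧ (∀ z s, 0 < fderiv ℝ φ (z, s) (0, 1)) ∧ (∀ q, 0 ≤ φ q) ∧
      φ (z₀, c) = σ ∧ (∀ z s, r ≤ ‖z - z₀‖ → N ≤ φ (z, s)) ∧ ∀ z, N ≤ φ (z, c + h) := by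
  have hN : 0 < N := hσ.trans hσN
  set K := Real.log (N / σ) / h with hK
  have hK0 : 0 < K := div_pos (Real.log_pos ((one_lt_div hσ).2 hσN)) hh
  have hKh : σ * Real.exp (K * h) = N := by
    rw [hK, div_mul_cancel₀ _ hh.ne', Real.exp_log (by positivity), mul_div_cancel₀ _ hσ.ne']
  set φ : E × ℝ → ℝ := fun q => σ * Real.exp (K * (q.2 - c)) + N / r ^ 2 * ‖q.1 - z₀‖ ^ 2 with hφ
  have hφ_diff : ContDiff ℝ 1 φ :=
    .add (by fun_prop) (contDiff_const.mul (ContDiff.norm_sq ℝ (by fun_prop)))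
  refine ⟨φ, hφ_diff, fun z s => ?_, fun q => by positivity, by simp [hφ], fun z s hz => ?_,
    fun z => ?_⟩
  · have hderiv : HasDerivAt (fun s => φ (z, s)) (σ * (Real.exp (K * (s - c)) * (K * 1))) s :=
      ((((hasDerivAt_id' s).sub_const c).const_mul K).exp.const_mul σ).add_const
        (N / r ^ 2 * ‖z - z₀‖ ^ 2)
    rw [(hasDerivAt_timeSlice (hφ_diff.differentiable one_ne_zero (z, s))).unique hderiv]
    positivity
  · have hfar : N ≤ N / r ^ 2 * ‖z - z₀‖ ^ 2 := by
      rw [div_mul_eq_mul_div, le_div_iff₀ (by positivity)]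
      gcongr
    exact hfar.trans (le_add_of_nonneg_left (by positivity))
  · simp only [hφ, add_sub_cancel_left, hKh]
    exact le_add_of_nonneg_right (by positivity)

variable [ProperSpace E]

theorem exists_isLocalMax_sub_of_lt {V : E × ℝ → ℝ} {z₀ : E} {t h ρ : ℝ} (hh : 0 < h)
    (hρ : 0 < ρ) (hV : ContinuousOn V (Metric.closedBall z₀ ρ ×ˢ Icc t (t + 2 * h)))
    (hlt : V (z₀, t) < V (z₀, t + h)) :
    ∃ φ : E × ℝ → ℝ, ContDiff ℝ 1 φ ∧ (∀ z s, 0 < fderiv ℝ φ (z, s) (0, 1)) ∧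
      ∃ q ∈ Metric.ball z₀ ρ ×ˢ Ioo t (t + 2 * h), IsLocalMax (fun q => V q - φ q) q := by
  have hcompact : IsCompact (Metric.closedBall z₀ ρ ×ˢ Icc t (t + 2 * h)) :=
    (isCompact_closedBall _ _).prod isCompact_Icc
  have hmid : (z₀, t + h) ∈ Metric.closedBall z₀ ρ ×ˢ Icc t (t + 2 * h) :=
    ⟨Metric.mem_closedBall_self hρ.le, by linarith, by linarith⟩
  obtain ⟨σ, hσ, hgap⟩ : ∃ σ > 0, V (z₀, t) + 2 * σ = V (z₀, t + h) :=
    ⟨(V (z₀, t + h) - V (z₀, t)) / 2, by linarith, by ring⟩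
  obtain ⟨r, hr, hrρ, hnear⟩ : ∃ r > 0, r ≤ ρ ∧ ∀ y, ‖y - z₀‖ < r → V (y, t) < V (z₀, t) + σ := by
    obtain ⟨r, hr, hclose⟩ := Metric.continuousWithinAt_iff.1
      (hV (z₀, t) ⟨Metric.mem_closedBall_self hρ.le, le_rfl, by linarith⟩) σ hσ
    refine ⟨min r ρ, lt_min hr hρ, min_le_right _ _, fun y hy => ?_⟩
    obtain ⟨hyr, hyρ⟩ := lt_min_iff.1 hy
    have := hclose (x := (y, t)) ⟨mem_closedBall_iff_norm.2 hyρ.le, le_rfl, by linarith⟩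
      (by rwa [dist_prod_same_right, dist_eq_norm])
    linarith [(abs_lt.1 this).2]
  obtain ⟨B, hB⟩ := hcompact.exists_bound_of_continuousOn hV
  have hBmid := neg_le_of_abs_le (hB _ hmid)
  have hB0 : 0 ≤ B := (norm_nonneg _).trans (hB _ hmid)
  obtain ⟨φ, hφ, hφ_deriv, hφ_nonneg, hφ_mid, hφ_far, hφ_top⟩ :=
    exists_contDiff_barrier z₀ (t + h) hh hr hσ (N := 2 * B + 2 * σ) (by linarith)
  refine ⟨φ, hφ, hφ_deriv, hcompact.exists_isLocalMax_mem_open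
    (prod_mono Metric.ball_subset_closedBall Ioo_subset_Icc_self)
    (hV.sub hφ.continuous.continuousOn) hmid ?_ (Metric.isOpen_ball.prod isOpen_Ioo)⟩
  -- The barrier exceeds the oscillation of `V` on the lateral and top faces; on the bottom face
  -- near `z₀` the gap `2 * σ` decides.
  rintro ⟨z, s⟩ ⟨⟨hz, hts, hst⟩, hboundary⟩
  have hVz := le_of_abs_le (hB _ ⟨hz, hts, hst⟩)
  rw [hφ_mid]
  rcases le_or_gt r ‖z - z₀‖ with hfar | hnearz
  · linarith [hφ_far z s hfar]
  rcases hts.eq_or_lt with rfl | hts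
  · linarith [hnear z hnearz, hφ_nonneg (z, t)]
  have htop : s = t + h + h := by
    refine (hst.antisymm (not_lt.1 fun hlt => hboundary ⟨?_, hts, hlt⟩)).trans (by ring)
    exact mem_ball_iff_norm.2 (hnearz.trans_le hrρ)
  linarith [htop ▸ hφ_top z]

theorem ViscTimeDerivLE.le_add_mul {v g : E × ℝ → ℝ} (hvg : ViscTimeDerivLE v g)
    (hv : ContinuousOn v {q | 0 ≤ q.2}) {z₀ : E} {t h ρ κ : ℝ} (ht : 0 ≤ t) (hh : 0 < h)
    (hρ : 0 < ρ) (hg : ∀ z s, ‖z - z₀‖ ≤ ρ → s ∈ Icc t (t + 2 * h) → g (z, s) ≤ κ) :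
    v (z₀, t + h) ≤ v (z₀, t) + h * κ := by
  by_contra! hlt
  obtain ⟨φ, hφ, hφ_deriv, ⟨z, s⟩, ⟨hz, hs⟩, hmax⟩ :=
    exists_isLocalMax_sub_of_lt (V := fun q => v q - κ * (q.2 - t)) hh hρ
      ((hv.mono fun q hq => ht.trans hq.2.1).sub (by fun_prop))
      (by simp only [sub_self, add_sub_cancel_left]; linarith)
  have hψ : ContDiff ℝ 1 fun q : E × ℝ => φ q + κ * (q.2 - t) := hφ.add (by fun_prop)
  have hderiv : HasDerivAt (fun s => φ (z, s) + κ * (s - t))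
      (fderiv ℝ φ (z, s) (0, 1) + κ * 1) s :=
    (hasDerivAt_timeSlice (hφ.differentiable one_ne_zero (z, s))).add
      (((hasDerivAt_id s).sub_const t).const_mul κ)
  have hle := hvg _ hψ z s (ht.trans_lt hs.1)
    (hmax.congr (.of_forall fun q => by simp only; ring))
  rw [(hasDerivAt_timeSlice (hψ.differentiable one_ne_zero (z, s))).unique hderiv] at hle
  linarith [hφ_deriv z s, hg z s (mem_ball_iff_norm.1 hz).le (Ioo_subset_Icc_self hs)]

end ViscosityTimeDerivative

section Characteristics

variable {n : ℕ} {H : En n → En n → ℝ} {u uo : En n × ℝ → ℝ} {c : En n} {ℓ : ℝ}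

theorem EvolSubIneq.viscTimeDerivLE (hsub : EvolSubIneq H u uo)
    (hH : ∀ x p, inner ℝ c p - ℓ ≤ H x p) :
    ViscTimeDerivLE (fun q => u (q.1 + q.2 • c, q.2))
      (fun q => uo (q.1 + q.2 • c, q.2) - u (q.1 + q.2 • c, q.2) + ℓ) := by
  intro φ hφ z s hs hmax
  set shear : En n × ℝ → En n × ℝ := fun q => (q.1 - q.2 • c, q.2) with hshear
  have hshear_apply : shear (z + s • c, s) = (z, s) := by simp [hshear]
  have hφ_at : HasFDerivAt φ (fderiv ℝ φ (z, s)) (shear (z + s • c, s)) :=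
    hshear_apply ▸ (hφ.differentiable one_ne_zero (z, s)).hasFDerivAt
  have hΦ : ContDiff ℝ 1 (φ ∘ shear) := hφ.comp (by fun_prop)
  have hΦmax : IsLocalMax (fun q => u q - (φ ∘ shear) q) (z + s • c, s) := by
    rw [← hshear_apply] at hmax
    have := hmax.comp_continuous (by fun_prop : Continuous shear).continuousAt
    simpa [Function.comp_def, hshear] using this
  have htime : fderiv ℝ (φ ∘ shear) (z + s • c, s) (0, 1) = fderiv ℝ φ (z, s) (-c, 1) := by
    have hline : HasDerivAt (fun s' => shear (z + s • c, s')) (-c, 1) s := by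
      simpa using
        (((hasDerivAt_id' s).smul_const c).const_sub (z + s • c)).prodMk (hasDerivAt_id' s)
    exact (hasDerivAt_timeSlice (hΦ.differentiable one_ne_zero _)).unique
      (hφ_at.comp_hasDerivAt (f := fun s' => shear (z + s • c, s')) s hline)
  have hspace : inner ℝ c (gradient (fun y => (φ ∘ shear) (y, s)) (z + s • c))
      = fderiv ℝ φ (z, s) (c, 0) := by
    have hslice : HasFDerivAt (fun y => shear (y, s)) (.inl ℝ (En n) ℝ) (z + s • c) :=
      ((hasFDerivAt_id (z + s • c)).sub_const (s • c)).prodMk (hasFDerivAt_const s _)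
    have hcomp : fderiv ℝ (fun y => (φ ∘ shear) (y, s)) (z + s • c)
        = (fderiv ℝ φ (z, s)).comp (.inl ℝ (En n) ℝ) := (hφ_at.comp (z + s • c) hslice).fderiv
    rw [real_inner_comm, inner_gradient_left, hcomp]
    simp
  have hsum : fderiv ℝ φ (z, s) (0, 1)
      = fderiv ℝ φ (z, s) (-c, 1) + fderiv ℝ φ (z, s) (c, 0) := by
    simp [← map_add]
  have hineq := hsub _ hΦ _ s hs hΦmax
  have hminorant := hH (z + s • c) (gradient (fun y => (φ ∘ shear) (y, s)) (z + s • c))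
  rw [htime] at hineq
  rw [hspace] at hminorant
  linarith

theorem EvolSubIneq.le_add_mul (hsub : EvolSubIneq H u uo)
    (hu : ContinuousOn u {q | 0 ≤ q.2}) (hH : ∀ x p, inner ℝ c p - ℓ ≤ H x p)
    {x : En n} {t h ρ κ : ℝ} (ht : 0 ≤ t) (hh : 0 < h) (hρ : 0 < ρ)
    (hκ : ∀ y s, ‖y - (x + (s - t) • c)‖ ≤ ρ → s ∈ Icc t (t + 2 * h) →
      uo (y, s) - u (y, s) ≤ κ) :
    u (x + h • c, t + h) ≤ u (x, t) + h * (κ + ℓ) := by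
  have hv : ContinuousOn (fun q : En n × ℝ => u (q.1 + q.2 • c, q.2)) {q | 0 ≤ q.2} :=
    hu.comp (by fun_prop) fun _ hq => hq
  have := (hsub.viscTimeDerivLE hH).le_add_mul hv (z₀ := x - t • c) (κ := κ + ℓ) ht hh hρ
    fun z s hz hs => by
      refine add_le_add_left (hκ _ s (le_of_eq_of_le (congrArg norm ?_) hz) hs) ℓ
      module
  have hstart : x - t • c + t • c = x := sub_add_cancel _ _
  have hend : x - t • c + (t + h) • c = x + h • c := by module
  simpa only [hstart, hend] using this

theorem EvolSubIneq.eventually_le_add_mul (hsub : EvolSubIneq H u uo) (hu : TorusContinuous u)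
    (huo : TorusContinuous uo) (hH : ∀ x p, inner ℝ c p - ℓ ≤ H x p) {t ε : ℝ} (ht : 0 ≤ t)
    (hε : 0 < ε) :
    ∀ᶠ h in 𝓝[>] 0, ∀ x,
      u (x + h • c, t + h) ≤ u (x, t) + h * (uo (x, t) - u (x, t) + ℓ + ε) := by
  obtain ⟨ρ, hρ, hmod⟩ := hu.exists_modulus ht (half_pos hε)
  obtain ⟨ρo, hρo, hmodo⟩ := huo.exists_modulus ht (half_pos hε)
  set r := min ρ ρo
  have hr0 : 0 < r := lt_min hρ hρo
  filter_upwards [Ioc_mem_nhdsGT (show 0 < r / (4 * (1 + ‖c‖)) by positivity)] with h ⟨hh, hhr⟩ x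
  have hhc : 0 ≤ h * ‖c‖ := by positivity
  rw [le_div_iff₀ (by positivity)] at hhr
  have := hsub.le_add_mul hu.continuousOn hH (x := x) (κ := uo (x, t) - u (x, t) + ε) ht hh
    (half_pos hr0) fun y s hy hs => by
      have hst : |s - t| ≤ r := by
        rw [abs_of_nonneg (by linarith [hs.1])]
        linarith [hs.2]
      have hyx : ‖y - x‖ ≤ r := calc
        ‖y - x‖ = ‖(y - (x + (s - t) • c)) + (s - t) • c‖ := by congr 1; abel
        _ ≤ r / 2 + (s - t) * ‖c‖ := by
          refine (norm_add_le _ _).trans (add_le_add hy (norm_smul_of_nonneg ?_ c).le)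
          linarith [hs.1]
        _ ≤ r / 2 + (2 * h) * ‖c‖ := by gcongr; linarith [hs.2]
        _ ≤ r := by linarith
      have hus := hmod x y s (ht.trans hs.1) (hyx.trans (min_le_left _ _))
        (hst.trans (min_le_left _ _))
      have huos := hmodo x y s (ht.trans hs.1) (hyx.trans (min_le_right _ _))
        (hst.trans (min_le_right _ _))
      linarith [(abs_le.1 hus).1, (abs_le.1 huos).2]
  linarith

end Characteristics

section LowerBound

variable {n : ℕ}

theorem EvolSuperIneq.deriv_le_zero {H : En n → En n → ℝ} {u uo : En n × ℝ → ℝ}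
    (hsup : EvolSuperIneq H u uo) (hH : ∀ x, H x 0 ≤ 0) {ψ : ℝ → ℝ} (hψ : ContDiff ℝ 1 ψ)
    {x : En n} {s : ℝ} (hs : 0 < s) (hle : u (x, s) ≤ uo (x, s))
    (hmax : IsLocalMax (fun q => -u q - ψ q.2) (x, s)) : deriv ψ s ≤ 0 := by
  have hΦ : ContDiff ℝ 1 fun q : En n × ℝ => -ψ q.2 := by fun_prop
  have hmin : IsLocalMin (fun q => u q - -ψ q.2) (x, s) :=
    hmax.neg.congr (.of_forall fun q => by simp only; ring)
  have htime : fderiv ℝ (fun q : En n × ℝ => -ψ q.2) (x, s) (0, 1) = -deriv ψ s :=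
    (hasDerivAt_timeSlice (hΦ.differentiable one_ne_zero _)).unique
      (hψ.differentiable one_ne_zero s).hasDerivAt.neg
  have hineq := hsup _ hΦ x s hs hmin
  have hspace : gradient (fun y : En n => -ψ (y, s).2) x = 0 :=
    gradient_fun_const x (-ψ s)
  rw [htime, hspace] at hineq
  linarith [hH x]

variable {H₁ H₂ : En n → En n → ℝ} {u₁ u₂ : En n × ℝ → ℝ}

theorem SysSuper.viscTimeDerivLE_spaceSup (hsup : SysSuper H₁ H₂ u₁ u₂)
    (hu₁ : TorusContinuous u₁) (hu₂ : TorusContinuous u₂) (hH₁ : ∀ x, H₁ x 0 ≤ 0)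
    (hH₂ : ∀ x, H₂ x 0 ≤ 0) :
    ViscTimeDerivLE (fun q : En n × ℝ => spaceSup (fun q => max (-u₁ q) (-u₂ q)) q.2)
      fun _ => 0 := by
  intro φ hφ z s hs hmax
  have hm := hu₁.neg.max hu₂.neg
  set m := spaceSup fun q => max (-u₁ q) (-u₂ q)
  have hψ : ContDiff ℝ 1 fun s => φ (z, s) := by fun_prop
  rw [← (hasDerivAt_timeSlice (hφ.differentiable one_ne_zero (z, s))).deriv]
  obtain ⟨x, hx⟩ := hm.exists_eq_spaceSup hs.le
  have hmax_time : IsLocalMax (fun q : En n × ℝ => m q.2 - φ (z, q.2)) (x, s) :=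
    hmax.comp_continuous (g := fun q : En n × ℝ => (z, q.2)) (b := (x, s)) (by fun_prop)
  have transfer : ∀ u : En n × ℝ → ℝ, (∀ q, -u q ≤ max (-u₁ q) (-u₂ q)) → -u (x, s) = m s →
      IsLocalMax (fun q => -u q - φ (z, q.2)) (x, s) := fun u hu hus => by
    filter_upwards [hmax_time, (continuous_snd.tendsto (x, s)).eventually (eventually_gt_nhds hs)]
      with q hq hq0
    linarith [hu q, hm.le_spaceSup hq0.le q.1]
  rcases le_total (u₁ (x, s)) (u₂ (x, s)) with h | h
  · exact hsup.1.deriv_le_zero hH₁ hψ hs h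
      (transfer u₁ (fun q => le_max_left _ _) ((max_eq_left (neg_le_neg h)).symm.trans hx))
  · exact hsup.2.deriv_le_zero hH₂ hψ hs h
      (transfer u₂ (fun q => le_max_right _ _) ((max_eq_right (neg_le_neg h)).symm.trans hx))

theorem SysSuper.exists_lower_bound (hsup : SysSuper H₁ H₂ u₁ u₂)
    (hu₁ : TorusContinuous u₁) (hu₂ : TorusContinuous u₂) (hH₁ : ∀ x, H₁ x 0 ≤ 0)
    (hH₂ : ∀ x, H₂ x 0 ≤ 0) :
    ∃ m, ∀ x t, 0 ≤ t → m ≤ u₁ (x, t) ∧ m ≤ u₂ (x, t) := by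
  have hm := hu₁.neg.max hu₂.neg
  set m := spaceSup fun q => max (-u₁ q) (-u₂ q)
  refine ⟨-m 0, fun x t ht => ?_⟩
  have hmono : m t ≤ m 0 := by
    rcases ht.eq_or_lt with rfl | ht
    · exact le_rfl
    have := (hsup.viscTimeDerivLE_spaceSup hu₁ hu₂ hH₁ hH₂).le_add_mul (z₀ := 0) (κ := 0)
      (hm.continuousOn_spaceSup.comp continuous_snd.continuousOn fun _ hq => hq) le_rfl ht one_pos
      fun _ _ _ _ => le_rfl
    simpa using this
  have := hm.le_spaceSup ht x
  exact ⟨by linarith [le_max_left (-u₁ (x, t)) (-u₂ (x, t))],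
    by linarith [le_max_right (-u₁ (x, t)) (-u₂ (x, t))]⟩

end LowerBound

section DiniDerivative

/-- The upper right Dini derivative of `f` at `x` is at most `d`. -/
def UpperRightDerivLE (f : ℝ → ℝ) (d x : ℝ) : Prop :=
  ∀ r > d, ∀ᶠ h in 𝓝[>] 0, f (x + h) ≤ f x + h * r

theorem UpperRightDerivLE.add {f g : ℝ → ℝ} {d e x : ℝ} (hf : UpperRightDerivLE f d x)
    (hg : UpperRightDerivLE g e x) : UpperRightDerivLE (fun s => f s + g s) (d + e) x := by
  intro r hr
  filter_upwards [hf (d + (r - (d + e)) / 2) (by linarith),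
    hg (e + (r - (d + e)) / 2) (by linarith)] with h hfh hgh
  linarith

theorem le_gronwallBound_of_upperRightDerivLE {f f' : ℝ → ℝ} {a b δ K ε : ℝ}
    (hf : ContinuousOn f (Icc a b)) (hf' : ∀ x ∈ Ico a b, UpperRightDerivLE f (f' x) x)
    (ha : f a ≤ δ) (hbound : ∀ x ∈ Ico a b, f' x ≤ K * f x + ε) {x : ℝ} (hx : x ∈ Icc a b) :
    f x ≤ gronwallBound δ K ε (x - a) := by
  refine le_gronwallBound_of_liminf_deriv_right_le hf (fun x hx r hr => ?_) ha hbound x hx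
  obtain ⟨r', hr', hr'r⟩ := exists_between hr
  have hshift : Tendsto (fun z => z - x) (𝓝[>] x) (𝓝[>] 0) := by
    refine tendsto_nhdsWithin_iff.2 ⟨tendsto_nhdsWithin_of_tendsto_nhds ?_, ?_⟩
    · simpa using (continuous_sub_right x).tendsto x
    · filter_upwards [self_mem_nhdsWithin] with z (hz : x < z) using sub_pos.2 hz
  refine Eventually.frequently ?_
  filter_upwards [hshift.eventually (hf' x hx r' hr'), self_mem_nhdsWithin] with z hz hxz
  have hpos : 0 < z - x := sub_pos.2 hxz
  rw [add_sub_cancel] at hz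
  rw [inv_mul_lt_iff₀ hpos]
  linarith [mul_lt_mul_of_pos_left hr'r hpos]

theorem le_add_mul_of_upperRightDerivLE {f : ℝ → ℝ} {a b d : ℝ} (hab : a ≤ b)
    (hf : ContinuousOn f (Icc a b)) (hf' : ∀ x ∈ Ico a b, UpperRightDerivLE f d x) :
    f b ≤ f a + d * (b - a) := by
  have := le_gronwallBound_of_upperRightDerivLE (K := 0) (ε := d) hf hf' le_rfl
    (fun x _ => by simp) (right_mem_Icc.2 hab)
  rwa [gronwallBound_K0] at this

theorem eventually_le_of_upperRightDerivLE {f f' : ℝ → ℝ} {a c η : ℝ}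
    (hf : ContinuousOn f (Ici a)) (hf' : ∀ x ≥ a, UpperRightDerivLE f (f' x) x)
    (hbound : ∀ x ≥ a, f' x ≤ 2 * c - 2 * f x) (hη : 0 < η) :
    ∀ᶠ t in atTop, f t ≤ c + η := by
  have hdecay : Tendsto (fun t => (f a - c) * Real.exp (-2 * (t - a))) atTop (𝓝 0) := by
    have : Tendsto (fun t : ℝ => -2 * (t - a)) atTop atBot :=
      (tendsto_atTop_add_const_right _ (-a) tendsto_id).const_mul_atTop_of_neg (by norm_num)
    simpa using (Real.tendsto_exp_atBot.comp this).const_mul (f a - c)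
  filter_upwards [hdecay.eventually_le_const hη, eventually_ge_atTop a] with t ht hat
  have := le_gronwallBound_of_upperRightDerivLE (K := -2) (ε := 2 * c)
    (hf.mono Icc_subset_Ici_self) (fun x hx => hf' x hx.1) le_rfl
    (fun x hx => by linarith [hbound x hx.1]) (right_mem_Icc.2 hat)
  rw [gronwallBound_of_K_ne_0 (by norm_num)] at this
  linarith

variable {A B : ℝ → ℝ}

theorem antitoneOn_add_of_coupled_upperRightDerivLE
    (hA : ContinuousOn A (Ici 0)) (hB : ContinuousOn B (Ici 0))
    (hA' : ∀ t ≥ 0, UpperRightDerivLE A (B t - A t) t)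
    (hB' : ∀ t ≥ 0, UpperRightDerivLE B (A t - B t) t) :
    AntitoneOn (fun t => A t + B t) (Ici 0) := by
  intro a (ha : 0 ≤ a) b _ hab
  have hderiv : ∀ t ≥ 0, UpperRightDerivLE (fun t => A t + B t) 0 t := fun t ht => by
    simpa using (hA' t ht).add (hB' t ht)
  simpa using le_add_mul_of_upperRightDerivLE hab
    ((hA.add hB).mono fun t ht => ha.trans ht.1) fun t ht => hderiv t (ha.trans ht.1)

theorem exists_eventually_le_of_coupled_upperRightDerivLE
    (hA : ContinuousOn A (Ici 0)) (hB : ContinuousOn B (Ici 0))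
    (hA' : ∀ t ≥ 0, UpperRightDerivLE A (B t - A t) t)
    (hB' : ∀ t ≥ 0, UpperRightDerivLE B (A t - B t) t)
    (hbdd : BddBelow ((fun t => A t + B t) '' Ici 0)) :
    ∃ M, (∀ t ≥ 0, 2 * M ≤ A t + B t) ∧
      ∀ η > 0, ∀ᶠ t in atTop, A t ≤ M + η ∧ B t ≤ M + η := by
  have hanti := antitoneOn_add_of_coupled_upperRightDerivLE hA hB hA' hB'
  set S := (fun t => A t + B t) '' Ici 0
  obtain ⟨M, hM⟩ : ∃ M, sInf S = 2 * M := ⟨sInf S / 2, by ring⟩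
  refine ⟨M, fun t ht => hM ▸ csInf_le hbdd (mem_image_of_mem _ ht), fun η hη => ?_⟩
  obtain ⟨_, ⟨a, ha, rfl⟩, hMa⟩ := exists_lt_of_csInf_lt (nonempty_Ici.image _)
    (show sInf S < 2 * M + η by linarith)
  have hsum : ∀ t ≥ a, A t + B t ≤ 2 * M + η := fun t ht =>
    (hanti ha (le_trans ha ht) ht).trans hMa.le
  have hA_le : ∀ᶠ t in atTop, A t ≤ (M + η / 2) + η / 2 :=
    eventually_le_of_upperRightDerivLE (hA.mono (Ici_subset_Ici.2 ha))
      (fun t ht => hA' t (le_trans ha ht)) (fun t ht => by linarith [hsum t ht]) (half_pos hη)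
  have hB_le : ∀ᶠ t in atTop, B t ≤ (M + η / 2) + η / 2 :=
    eventually_le_of_upperRightDerivLE (hB.mono (Ici_subset_Ici.2 ha))
      (fun t ht => hB' t (le_trans ha ht)) (fun t ht => by linarith [hsum t ht]) (half_pos hη)
  filter_upwards [hA_le, hB_le] with t hAt hBt
  exact ⟨by linarith, by linarith⟩

end DiniDerivative

section FanSum

variable {n : ℕ}

/-- The sum of `u` at time `t₀ + s` over the points that, moving with velocities `w / T` for
`w ∈ W`, start at `x - w` when `s = 0` and meet at `x` when `s = T`; here `q = (x, s)`. -/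
noncomputable def fanSum (W : Finset (En n)) (t₀ T : ℝ) (u : En n × ℝ → ℝ) (q : En n × ℝ) : ℝ :=
  ∑ w ∈ W, u (q.1 - (1 - q.2 / T) • w, t₀ + q.2)

theorem fanSum_singleton_zero (T : ℝ) (u : En n × ℝ → ℝ) : fanSum {0} 0 T u = u := by
  ext
  simp [fanSum]

variable {t₀ T s : ℝ} {u uo : En n × ℝ → ℝ}

theorem TorusContinuous.fanSum (hu : TorusContinuous u) (ht₀ : 0 ≤ t₀) (W : Finset (En n))
    (T : ℝ) : TorusContinuous (fanSum W t₀ T u) := by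
  refine ⟨fun x k s => Finset.sum_congr rfl fun w _ => ?_, ?_⟩
  · simpa only [add_sub_right_comm] using hu.periodic _ k _
  · exact continuousOn_finsetSum _ fun w _ =>
      hu.continuousOn.comp (by fun_prop) fun q hq => add_nonneg ht₀ hq

variable {W : Finset (En n)} {b : En n}

theorem fanSum_add_smul_le {h e : ℝ}
    (hstep : ∀ w ∈ W, ∀ x, u (x + h • (b + T⁻¹ • w), t₀ + s + h)
      ≤ u (x, t₀ + s) + h * (uo (x, t₀ + s) - u (x, t₀ + s) + e)) (x : En n) :
    fanSum W t₀ T u (x + h • b, s + h)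
      ≤ (1 - h) * fanSum W t₀ T u (x, s) + h * fanSum W t₀ T uo (x, s) + h * (W.card * e) := calc
  fanSum W t₀ T u (x + h • b, s + h)
    ≤ ∑ w ∈ W, ((1 - h) * u (x - (1 - s / T) • w, t₀ + s)
        + h * uo (x - (1 - s / T) • w, t₀ + s) + h * e) := by
      refine Finset.sum_le_sum fun w hw => ?_
      have hpoint : x + h • b - (1 - (s + h) / T) • w
          = x - (1 - s / T) • w + h • (b + T⁻¹ • w) := by
        simp only [div_eq_mul_inv]
        module
      simp only [hpoint, ← add_assoc]
      linarith [hstep w hw (x - (1 - s / T) • w)]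
  _ = _ := by
      simp only [fanSum, Finset.sum_add_distrib, ← Finset.mul_sum, Finset.sum_const, nsmul_eq_mul]

theorem EvolSubIneq.upperRightDerivLE_spaceSup_fanSum {H : En n → En n → ℝ} {ℓ : ℝ}
    (hsub : EvolSubIneq H u uo) (hu : TorusContinuous u) (huo : TorusContinuous uo)
    (hH : ∀ w ∈ W, ∀ x p, inner ℝ (b + T⁻¹ • w) p - ℓ ≤ H x p) (ht₀ : 0 ≤ t₀) (hs : 0 ≤ s) :
    UpperRightDerivLE (spaceSup (fanSum W t₀ T u))
      (spaceSup (fanSum W t₀ T uo) s - spaceSup (fanSum W t₀ T u) s + W.card * ℓ) s := by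
  intro r hr
  obtain ⟨ε, hε, hεr⟩ : ∃ ε > 0, spaceSup (fanSum W t₀ T uo) s - spaceSup (fanSum W t₀ T u) s
      + W.card * (ℓ + ε) ≤ r := by
    set d := spaceSup (fanSum W t₀ T uo) s - spaceSup (fanSum W t₀ T u) s
    refine ⟨(r - (d + W.card * ℓ)) / (W.card + 1), div_pos (sub_pos.2 hr) (by positivity), ?_⟩
    have hshare : W.card * ((r - (d + W.card * ℓ)) / (W.card + 1)) ≤ r - (d + W.card * ℓ) := by
      rw [← mul_div_assoc, div_le_iff₀ (by positivity)]
      linarith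
    linarith
  have hstep : ∀ᶠ h in 𝓝[>] (0 : ℝ), ∀ w ∈ W, ∀ x, u (x + h • (b + T⁻¹ • w), t₀ + s + h)
      ≤ u (x, t₀ + s) + h * (uo (x, t₀ + s) - u (x, t₀ + s) + (ℓ + ε)) := by
    simp only [← add_assoc _ ℓ ε]
    exact (Finset.eventually_all W).2 fun w hw =>
      hsub.eventually_le_add_mul hu huo (hH w hw) (add_nonneg ht₀ hs) hε
  filter_upwards [hstep, Ioc_mem_nhdsGT one_pos] with h hh ⟨hh0, hh1⟩
  refine spaceSup_le fun y => ?_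
  have hmove := fanSum_add_smul_le hh (y - h • b)
  rw [sub_add_cancel] at hmove
  have hle := mul_le_mul_of_nonneg_left ((hu.fanSum ht₀ W T).le_spaceSup hs (y - h • b))
    (sub_nonneg.2 hh1)
  have hleo := mul_le_mul_of_nonneg_left ((huo.fanSum ht₀ W T).le_spaceSup hs (y - h • b)) hh0.le
  linarith [mul_le_mul_of_nonneg_left hεr hh0.le]

end FanSum

section SupportedSubsolution

variable {n : ℕ}

/-- A continuous subsolution of (C) on the torus whose Hamiltonians have affine minorants. -/
structure SupportedSubsolution (H₁ H₂ : En n → En n → ℝ) (b₁ b₂ : En n) (C : ℝ)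
    (u₁ u₂ : En n × ℝ → ℝ) : Prop where
  continuous₁ : TorusContinuous u₁
  continuous₂ : TorusContinuous u₂
  sub : SysSub H₁ H₂ u₁ u₂
  nonneg : 0 ≤ C
  minorants₁ : HasAffineMinorants H₁ b₁ C
  minorants₂ : HasAffineMinorants H₂ b₂ C

namespace SupportedSubsolution

variable {H₁ H₂ : En n → En n → ℝ} {b₁ b₂ : En n} {C : ℝ} {u₁ u₂ : En n × ℝ → ℝ}

theorem symm (hu : SupportedSubsolution H₁ H₂ b₁ b₂ C u₁ u₂) :
    SupportedSubsolution H₂ H₁ b₂ b₁ C u₂ u₁ :=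
  ⟨hu.continuous₂, hu.continuous₁, hu.sub.symm, hu.nonneg, hu.minorants₂, hu.minorants₁⟩

theorem upperRightDerivLE_spaceSup_fanSum (hu : SupportedSubsolution H₁ H₂ b₁ b₂ C u₁ u₂)
    {W : Finset (En n)} {R t₀ T s : ℝ} (hW : ∀ w ∈ W, ‖w‖ ≤ R) (hT : 0 < T) (ht₀ : 0 ≤ t₀)
    (hs : 0 ≤ s) :
    UpperRightDerivLE (spaceSup (fanSum W t₀ T u₁))
      (spaceSup (fanSum W t₀ T u₂) s - spaceSup (fanSum W t₀ T u₁) s + W.card * (C * (R / T) ^ 2))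
      s := by
  refine hu.sub.1.upperRightDerivLE_spaceSup_fanSum hu.continuous₁ hu.continuous₂
    (b := b₁) (fun w hw x p => le_trans ?_ (hu.minorants₁ (T⁻¹ • w) x p)) ht₀ hs
  have hC := hu.nonneg
  have hv : ‖T⁻¹ • w‖ ≤ R / T := by
    rw [norm_smul_of_nonneg (by positivity), inv_mul_eq_div]
    exact div_le_div_of_nonneg_right (hW w hw) hT.le
  gcongr

theorem upperRightDerivLE_spaceSup (hu : SupportedSubsolution H₁ H₂ b₁ b₂ C u₁ u₂) {t : ℝ}
    (ht : 0 ≤ t) : UpperRightDerivLE (spaceSup u₁) (spaceSup u₂ t - spaceSup u₁ t) t := by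
  simpa [fanSum_singleton_zero] using hu.upperRightDerivLE_spaceSup_fanSum (W := {0}) (R := 0)
    (by simp) one_pos le_rfl ht

theorem card_mul_spaceSup_add_le (hu : SupportedSubsolution H₁ H₂ b₁ b₂ C u₁ u₂)
    {W : Finset (En n)} {R t₀ T a₁ a₂ : ℝ} (hW : ∀ w ∈ W, ‖w‖ ≤ R) (hT : 0 < T) (ht₀ : 0 ≤ t₀)
    (ha₁ : ∀ x, ∑ w ∈ W, u₁ (x - w, t₀) ≤ a₁) (ha₂ : ∀ x, ∑ w ∈ W, u₂ (x - w, t₀) ≤ a₂) :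
    W.card * (spaceSup u₁ (t₀ + T) + spaceSup u₂ (t₀ + T))
      ≤ a₁ + a₂ + 2 * W.card * (C * R ^ 2 / T) := by
  have hstart : ∀ u a, (∀ x, ∑ w ∈ W, u (x - w, t₀) ≤ a) → spaceSup (fanSum W t₀ T u) 0 ≤ a :=
    fun u a ha => spaceSup_le fun x => by simpa [fanSum] using ha x
  have hend : ∀ u, TorusContinuous u →
      W.card * spaceSup u (t₀ + T) ≤ spaceSup (fanSum W t₀ T u) T := fun u hu => by
    obtain ⟨x, hx⟩ := hu.exists_eq_spaceSup (add_nonneg ht₀ hT.le)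
    simpa [fanSum, div_self hT.ne', hx] using (hu.fanSum ht₀ W T).le_spaceSup hT.le x
  have hgrowth : spaceSup (fanSum W t₀ T u₁) T + spaceSup (fanSum W t₀ T u₂) T
      ≤ spaceSup (fanSum W t₀ T u₁) 0 + spaceSup (fanSum W t₀ T u₂) 0
        + 2 * W.card * (C * (R / T) ^ 2) * (T - 0) := by
    refine le_add_mul_of_upperRightDerivLE
      (f := fun s => spaceSup (fanSum W t₀ T u₁) s + spaceSup (fanSum W t₀ T u₂) s) hT.le
      (((hu.continuous₁.fanSum ht₀ W T).continuousOn_spaceSup.add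
        (hu.continuous₂.fanSum ht₀ W T).continuousOn_spaceSup).mono Icc_subset_Ici_self)
      fun s hs => ?_
    convert (hu.upperRightDerivLE_spaceSup_fanSum hW hT ht₀ hs.1).add
      (hu.symm.upperRightDerivLE_spaceSup_fanSum hW hT ht₀ hs.1) using 1
    ring
  have hcost : 2 * W.card * (C * (R / T) ^ 2) * (T - 0) = 2 * W.card * (C * R ^ 2 / T) := by
    field_simp
    ring
  linarith [hstart u₁ a₁ ha₁, hstart u₂ a₂ ha₂, hend u₁ hu.continuous₁, hend u₂ hu.continuous₂]

theorem exists_le_add_of_norm_sub_le (hu : SupportedSubsolution H₁ H₂ b₁ b₂ C u₁ u₂) {D κ : ℝ}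
    (hD : ∀ x t, 0 ≤ t → u₂ (x, t) - u₁ (x, t) ≤ D) (hκ : 0 < κ) :
    ∃ τ > 0, ∃ r > 0, ∀ x y t, 0 ≤ t → ‖y - (x + τ • b₁)‖ ≤ r →
      u₁ (y, t + τ) ≤ u₁ (x, t) + κ := by
  have hC := hu.nonneg
  obtain ⟨τ, hτ, hDτ⟩ : ∃ τ > 0, τ * D ≤ κ / 2 :=
    ⟨κ / 2 / (|D| + 1), by positivity, by
      rw [div_mul_eq_mul_div, div_le_iff₀ (by positivity)]
      exact mul_le_mul_of_nonneg_left (by linarith [le_abs_self D]) (by positivity)⟩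
  obtain ⟨r, hr, hCr⟩ : ∃ r > 0, C * r ^ 2 / τ ≤ κ / 2 :=
    ⟨√(κ / 2 * τ / (C + 1)), by positivity, by
      rw [Real.sq_sqrt (by positivity), div_le_iff₀ hτ, mul_div_assoc', div_le_iff₀ (by positivity)]
      nlinarith [mul_pos hκ hτ]⟩
  refine ⟨τ, hτ, r, hr, fun x y t ht hy => ?_⟩
  set v := τ⁻¹ • (y - (x + τ • b₁)) with hv
  have hcost : τ * (C * ‖v‖ ^ 2) ≤ κ / 2 := calc
    τ * (C * ‖v‖ ^ 2) = C * ‖y - (x + τ • b₁)‖ ^ 2 / τ := by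
      rw [hv, norm_smul_of_nonneg (by positivity)]
      field_simp
    _ ≤ C * r ^ 2 / τ := by gcongr
    _ ≤ κ / 2 := hCr
  have hend : x + τ • (b₁ + v) = y := by
    rw [hv, smul_add, smul_inv_smul₀ hτ.ne']
    abel
  have hmove := hu.sub.1.le_add_mul (x := x) hu.continuous₁.continuousOn (hu.minorants₁ v)
    ht hτ one_pos fun y s _ hs => hD y s (ht.trans hs.1)
  rw [hend] at hmove
  linarith

theorem le_two_mul_card_mul_of_dip (hu : SupportedSubsolution H₁ H₂ b₁ b₂ C u₁ u₂)
    {W : Finset (En n)} {M R t₀ T κ η : ℝ} (hM : ∀ t ≥ 0, 2 * M ≤ spaceSup u₁ t + spaceSup u₂ t)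
    (hW : ∀ w ∈ W, ‖w‖ ≤ R) (hT : 0 < T) (ht₀ : 0 ≤ t₀) (hη : 0 ≤ η)
    (hu₁ : ∀ x, u₁ (x, t₀) ≤ M + η) (hu₂ : ∀ x, u₂ (x, t₀) ≤ M + η)
    (hdip : ∀ x, ∃ w ∈ W, u₁ (x - w, t₀) ≤ M - κ) :
    κ ≤ 2 * W.card * (η + C * R ^ 2 / T) := by
  have hsum₁ : ∀ x, ∑ w ∈ W, u₁ (x - w, t₀) ≤ W.card * (M + η) - (η + κ) := fun x => by
    obtain ⟨w, hw, hwκ⟩ := hdip x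
    rw [← Finset.add_sum_erase W _ hw]
    have hrest := (W.erase w).sum_le_card_nsmul _ _ fun w _ => hu₁ (x - w)
    rw [nsmul_eq_mul, Finset.cast_card_erase_of_mem hw] at hrest
    linarith
  have hsum₂ : ∀ x, ∑ w ∈ W, u₂ (x - w, t₀) ≤ W.card * (M + η) := fun x =>
    nsmul_eq_mul W.card (M + η) ▸ W.sum_le_card_nsmul _ _ fun w _ => hu₂ (x - w)
  have hdrop := hu.card_mul_spaceSup_add_le hW hT ht₀ hsum₁ hsum₂
  have hfloor := mul_le_mul_of_nonneg_left (hM (t₀ + T) (by positivity)) W.card.cast_nonneg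
  linarith

theorem eventually_sub_le (hu : SupportedSubsolution H₁ H₂ b₁ b₂ C u₁ u₂) {D M κ : ℝ}
    (hD : ∀ x t, 0 ≤ t → u₂ (x, t) - u₁ (x, t) ≤ D)
    (hM : ∀ t ≥ 0, 2 * M ≤ spaceSup u₁ t + spaceSup u₂ t)
    (hlim : ∀ η > 0, ∀ᶠ t in atTop, spaceSup u₁ t ≤ M + η ∧ spaceSup u₂ t ≤ M + η)
    (hκ : 0 < κ) : ∀ᶠ t in atTop, ∀ x, M - κ ≤ u₁ (x, t) := by
  obtain ⟨τ, hτ, r, hr, hspread⟩ := hu.exists_le_add_of_norm_sub_le hD (half_pos hκ)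
  obtain ⟨W, hW, hnet⟩ := exists_finset_net (n := n) hr
  obtain ⟨η, hη, hηκ⟩ : ∃ η > 0, 4 * W.card * η < κ / 2 :=
    ⟨κ / 2 / (4 * W.card + 1), by positivity, by
      rw [mul_div_assoc', div_lt_iff₀ (by positivity)]
      linarith⟩
  obtain ⟨T, hTη, hT⟩ : ∃ T, C * √n ^ 2 / T ≤ η ∧ 0 < T :=
    (((tendsto_const_nhds.div_atTop tendsto_id).eventually_le_const hη).and
      (eventually_gt_atTop 0)).exists
  filter_upwards [eventually_ge_atTop 0,
    (tendsto_atTop_add_const_right atTop τ tendsto_id).eventually (hlim η hη)] with t ht hup x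
  simp only [id_eq] at hup
  by_contra! hx
  have ht₀ : 0 ≤ t + τ := by positivity
  have hdip : ∀ y, ∃ w ∈ W, u₁ (y - w, t + τ) ≤ M - κ / 2 := fun y => by
    obtain ⟨w, hw, k, hk⟩ := hnet (y - (x + τ • b₁))
    refine ⟨w, hw, ?_⟩
    rw [← hu.continuous₁.periodic _ k]
    have hclose : ‖y - w + intVec n k - (x + τ • b₁)‖ ≤ r := by
      convert hk using 2
      abel
    linarith [hspread x _ t ht hclose]
  have := hu.le_two_mul_card_mul_of_dip hM hW hT ht₀ hη.le
    (fun y => (hu.continuous₁.le_spaceSup ht₀ y).trans hup.1)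
    (fun y => (hu.continuous₂.le_spaceSup ht₀ y).trans hup.2) hdip
  have hsmall : 2 * W.card * (η + C * √n ^ 2 / T) ≤ 2 * W.card * (η + η) := by gcongr
  linarith

theorem exists_unifTendsTo (hu : SupportedSubsolution H₁ H₂ b₁ b₂ C u₁ u₂) {m : ℝ}
    (hm : ∀ x t, 0 ≤ t → m ≤ u₁ (x, t) ∧ m ≤ u₂ (x, t)) :
    ∃ M, UnifTendsTo u₁ (fun _ => M) ∧ UnifTendsTo u₂ (fun _ => M) := by
  have hle₁ : ∀ t, 0 ≤ t → ∀ x, u₁ (x, t) ≤ spaceSup u₁ t := fun t => hu.continuous₁.le_spaceSup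
  have hle₂ : ∀ t, 0 ≤ t → ∀ x, u₂ (x, t) ≤ spaceSup u₂ t := fun t => hu.continuous₂.le_spaceSup
  have hcont₁ := hu.continuous₁.continuousOn_spaceSup
  have hcont₂ := hu.continuous₂.continuousOn_spaceSup
  have hderiv₁ := fun t (ht : t ≥ 0) => hu.upperRightDerivLE_spaceSup ht
  have hderiv₂ := fun t (ht : t ≥ 0) => hu.symm.upperRightDerivLE_spaceSup ht
  have hbdd : BddBelow ((fun t => spaceSup u₁ t + spaceSup u₂ t) '' Ici 0) :=
    ⟨m + m, forall_mem_image.2 fun t ht => add_le_add ((hm 0 t ht).1.trans (hle₁ t ht 0))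
      ((hm 0 t ht).2.trans (hle₂ t ht 0))⟩
  obtain ⟨M, hM, hlim⟩ :=
    exists_eventually_le_of_coupled_upperRightDerivLE hcont₁ hcont₂ hderiv₁ hderiv₂ hbdd
  have hsum : ∀ x t, 0 ≤ t → u₁ (x, t) + u₂ (x, t) ≤ spaceSup u₁ 0 + spaceSup u₂ 0 :=
    fun x t ht => (add_le_add (hle₁ t ht x) (hle₂ t ht x)).trans
      (antitoneOn_add_of_coupled_upperRightDerivLE hcont₁ hcont₂ hderiv₁ hderiv₂
        self_mem_Ici ht ht)
  set D := spaceSup u₁ 0 + spaceSup u₂ 0 - 2 * m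
  have hlow₁ : ∀ ε > 0, ∀ᶠ t in atTop, ∀ x, M - ε ≤ u₁ (x, t) := fun ε =>
    hu.eventually_sub_le (D := D)
      (fun x t ht => by linarith [hsum x t ht, (hm x t ht).1]) hM hlim
  have hlow₂ : ∀ ε > 0, ∀ᶠ t in atTop, ∀ x, M - ε ≤ u₂ (x, t) := fun ε =>
    hu.symm.eventually_sub_le (D := D)
      (fun x t ht => by linarith [hsum x t ht, (hm x t ht).2])
      (fun t ht => add_comm (spaceSup u₁ t) _ ▸ hM t ht)
      fun η hη => (hlim η hη).mono fun _ => And.symm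
  exact ⟨M, hu.continuous₁.unifTendsTo_const (fun η hη => (hlim η hη).mono fun _ => And.left) hlow₁,
    hu.continuous₂.unifTendsTo_const (fun η hη => (hlim η hη).mono fun _ => And.right) hlow₂⟩

end SupportedSubsolution

end SupportedSubsolution

theorem stmt9_general {n : ℕ} {H₁ H₂ : En n → En n → ℝ} (hH₁ : HasQuadraticSupport H₁)
    (hH₂ : HasQuadraticSupport H₂) (hH₁0 : ∀ x, H₁ x 0 ≤ 0) (hH₂0 : ∀ x, H₂ x 0 ≤ 0)
    {u₀₁ u₀₂ : En n → ℝ} {u₁ u₂ : En n × ℝ → ℝ} (hu₁per : ZPeriodicST u₁)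
    (hu₂per : ZPeriodicST u₂) (hsol : SysSolution H₁ H₂ u₀₁ u₀₂ u₁ u₂) :
    ∃ M : ℝ, UnifTendsTo u₁ (fun _ => M) ∧ UnifTendsTo u₂ (fun _ => M) := by
  obtain ⟨hu₁cont, hu₂cont, hsub, hsup, -, -⟩ := hsol
  obtain ⟨b₁, C₁, hC₁, hmin₁⟩ := hH₁.exists_hasAffineMinorants
  obtain ⟨b₂, C₂, -, hmin₂⟩ := hH₂.exists_hasAffineMinorants
  have hu : SupportedSubsolution H₁ H₂ b₁ b₂ (max C₁ C₂) u₁ u₂ :=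
    { continuous₁ := ⟨hu₁per, hu₁cont⟩
      continuous₂ := ⟨hu₂per, hu₂cont⟩
      sub := hsub
      nonneg := hC₁.trans (le_max_left C₁ C₂)
      minorants₁ := hmin₁.mono (le_max_left C₁ C₂)
      minorants₂ := hmin₂.mono (le_max_right C₁ C₂) }
  obtain ⟨m, hm⟩ := hsup.exists_lower_bound hu.continuous₁ hu.continuous₂ hH₁0 hH₂0
  exact hu.exists_unifTendsTo hm

/-- Convergence Result 2 (Theorem 1.2): for `x`-independent, uniformly convex
Hamiltonians with `Hᵢ(0) = 0`, solutions of (C) converge uniformly to a constant. -/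
theorem stmt9 (n : ℕ) (hn : 1 ≤ n) (Hp₁ Hp₂ : En n → ℝ)
    (hH₁cont : Continuous Hp₁) (hH₂cont : Continuous Hp₂)
    (hH₁coer : CoerciveP Hp₁) (hH₂coer : CoerciveP Hp₂)
    (hA6₁ : UnifConvex Hp₁) (hA6₂ : UnifConvex Hp₂)
    (hA7₁ : Hp₁ 0 = 0) (hA7₂ : Hp₂ 0 = 0)
    (u₀₁ u₀₂ : En n → ℝ) (hu₀₁ : IsLip u₀₁) (hu₀₂ : IsLip u₀₂)
    (hu₀₁per : ZPeriodic u₀₁) (hu₀₂per : ZPeriodic u₀₂)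
    (u₁ u₂ : En n × ℝ → ℝ) (hu₁per : ZPeriodicST u₁) (hu₂per : ZPeriodicST u₂)
    (hsol : SysSolution (fun _ p => Hp₁ p) (fun _ p => Hp₂ p) u₀₁ u₀₂ u₁ u₂) :
    ∃ M : ℝ, UnifTendsTo u₁ (fun _ => M) ∧ UnifTendsTo u₂ (fun _ => M) :=
  stmt9_general (hA6₁.hasQuadraticSupport hH₁cont hA7₁) (hA6₂.hasQuadraticSupport hH₂cont hA7₂)
    (fun _ => hA7₁.le) (fun _ => hA7₂.le) hu₁per hu₂per hsol
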